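/- arXiv:2106.03652 — 3 statements merged into one kernel-verified Lean document; each statement's English description precedes it below -/
import Mathlib

section
/- Let 𝒞 be a category and let C be an object equipped with a binary product cone (p₁, p₂ : C → C) exhibiting C as the product of C with C, and let α : C → C be the unique morphism satisfying p₁ ∘ α = p₁ ∘ p₁, p₁ ∘ p₂ ∘ α = p₂ ∘ p₁, and p₂ ∘ α = p₂ ∘ p₂. If α = id_C, then p₁ = id_C. -/
open CategoryTheory CategoryTheory.Limits

universe u v

/-- If the associator component `α` built from the single cone
`(p₁, p₂ : C ⟶ C)` is the identity, then `p₁ = 𝟙 C`. -/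
theorem stmt1 {𝒞 : Type u} [Category.{v} 𝒞] (C : 𝒞) (p₁ p₂ : C ⟶ C)
    (hlim : IsLimit (BinaryFan.mk p₁ p₂))
    (α : C ⟶ C)
    (h₁ : α ≫ p₁ = p₁ ≫ p₁)
    (h₂ : α ≫ p₂ ≫ p₁ = p₁ ≫ p₂)
    (h₃ : α ≫ p₂ = p₂ ≫ p₂)
    (hα : α = 𝟙 C) :
    p₁ = 𝟙 C := by
  obtain ⟨s, hs⟩ : ∃ s : C ⟶ C, s ≫ p₁ = 𝟙 C :=
    ⟨hlim.lift (BinaryFan.mk (𝟙 C) (𝟙 C)),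
      hlim.fac (BinaryFan.mk (𝟙 C) (𝟙 C)) ⟨WalkingPair.left⟩⟩
  have hi : p₁ ≫ p₁ = p₁ := by rw [← h₁, hα, Category.id_comp]
  calc p₁ = (s ≫ p₁) ≫ p₁ := by rw [hs, Category.id_comp]
    _ = 𝟙 C := by rw [Category.assoc, hi, hs]
end

section
/- Let 𝒞 be a category and let C be an object equipped with a binary product cone (p₁, p₂ : C → C) exhibiting C as the product of C with C, and let α : C → C be the unique morphism satisfying p₁ ∘ α = p₁ ∘ p₁, p₁ ∘ p₂ ∘ α = p₂ ∘ p₁, and p₂ ∘ α = p₂ ∘ p₂. If α = id_C, then p₂ = id_C. -/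
open CategoryTheory CategoryTheory.Limits

universe u v

/-- **Statement 1.** If the associator component `α` built from the single cone
`(p₁, p₂ : C ⟶ C)` is the identity, then `p₂ = 𝟙 C`. -/
theorem stmt2 {𝒞 : Type u} [Category.{v} 𝒞] (C : 𝒞) (p₁ p₂ : C ⟶ C)
    (hlim : IsLimit (BinaryFan.mk p₁ p₂))
    (α : C ⟶ C)
    (h₁ : α ≫ p₁ = p₁ ≫ p₁)
    (h₂ : α ≫ p₂ ≫ p₁ = p₁ ≫ p₂)
    (h₃ : α ≫ p₂ = p₂ ≫ p₂)
    (hα : α = 𝟙 C) :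
    p₂ = 𝟙 C := by
  subst hα
  obtain ⟨d, -, hd⟩ := BinaryFan.IsLimit.lift' hlim (𝟙 C) (𝟙 C)
  have hd' : d ≫ p₂ = 𝟙 C := hd
  have h : p₂ = p₂ ≫ p₂ := by simpa using h₃
  calc p₂ = (d ≫ p₂) ≫ p₂ := by rw [hd', Category.id_comp]
    _ = d ≫ p₂ := by rw [Category.assoc, ← h]
    _ = 𝟙 C := hd'
end

section
/- Let 𝒞 be a category and let C be an object equipped with a binary product cone (p₁, p₂ : C → C) exhibiting C as the product of C with C. For f, g : C → C, let f × g : C → C denote the unique morphism with p₁ ∘ (f × g) = f ∘ p₁ and p₂ ∘ (f × g) = g ∘ p₂. If f, g, h : C → C are morphisms such that (f × g) × h = f × (g × h), then f × g = f. -/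
open CategoryTheory CategoryTheory.Limits

universe u v

/-- Let `(p₁, p₂ : C ⟶ C)` be a binary product cone exhibiting `C` as the
product of `C` with `C`, and for `f g : C ⟶ C` let `prod f g : C ⟶ C` be the unique
morphism with `p₁ ∘ prod f g = f ∘ p₁` and `p₂ ∘ prod f g = g ∘ p₂` (all four cones in the
iterated products being the same cone `(p₁, p₂)` — Isbell's hidden hypothesis).
If `(f × g) × h = f × (g × h)` then `f × g = f`. -/
theorem stmt16 {𝒞 : Type u} [Category.{v} 𝒞] (C : 𝒞) (p₁ p₂ : C ⟶ C)
    (hlim : IsLimit (BinaryFan.mk p₁ p₂))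
    (prod : (C ⟶ C) → (C ⟶ C) → (C ⟶ C))
    (hprod₁ : ∀ f g : C ⟶ C, prod f g ≫ p₁ = p₁ ≫ f)
    (hprod₂ : ∀ f g : C ⟶ C, prod f g ≫ p₂ = p₂ ≫ g)
    (f g h : C ⟶ C)
    (hassoc : prod (prod f g) h = prod f (prod g h)) :
    prod f g = f := by
  have key : p₁ ≫ prod f g = p₁ ≫ f := by
    rw [← hprod₁ (prod f g) h, hassoc, hprod₁]
  obtain ⟨d, hd, -⟩ := BinaryFan.IsLimit.lift' hlim (𝟙 C) (𝟙 C)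
  have hd' : d ≫ p₁ = 𝟙 C := hd
  have := congrArg (fun k => d ≫ k) key
  simpa only [← Category.assoc, hd', Category.id_comp] using this
end
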